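/- Let n ≥ 3 be a finite natural number, let 𝔄 be a csp-algebra of dimension n satisfying the FPA_n axioms, and suppose d_kl ∈ A (k, l < n) are elements satisfying s_kl d_kl = 1 and x · d_kl ≤ s_kl x for all x ∈ A and all k, l < n. Then for all i, j, k, l < n: p_ij(d_kl) = d_{τ(k) τ(l)}, where τ = [i,j] is the transposition of Fin n exchanging i and j. -/

import Mathlib

/-!
The element `d i j` is the least `x` with `s i j x = ⊤`, and `s i j x` agrees with `x` below
`d i j`. If `c j x = x`, then (F9) gives `s i j x = p i j x`, so `p i j x` agrees with `x` below
`d i j`. For distinct `i`, `j`, `k` this applies to `d i k` and yields first transitivity,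
`d i j ⊓ d j k ≤ d i k`, and then `p i j (d i k) = d j k`. For `k ≠ l` the remaining `d k l` have
the form `p i m (d a b)` with `p i j (d a b)` already known, and (F8) moves `p i m` past `p i j`.
-/

section BooleanHom

variable {A B : Type*} [BooleanAlgebra A] [BooleanAlgebra B]

/-- The Boolean homomorphism with underlying function `f`, where (as in axiom (F6)) being Boolean
is expressed by the preservation of joins and complements. -/
def boundedLatticeHomOfSupCompl (f : A → B) (map_sup : ∀ x y, f (x ⊔ y) = f x ⊔ f y)
    (map_compl : ∀ x, f xᶜ = (f x)ᶜ) : BoundedLatticeHom A B where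
  toFun := f
  map_sup' := map_sup
  map_inf' x y := by
    rw [← compl_inj_iff, ← map_compl, compl_inf, map_sup, map_compl, map_compl, compl_inf]
  map_top' := by rw [← sup_compl_eq_top (x := (⊤ : A)), map_sup, map_compl, sup_compl_eq_top]
  map_bot' := by
    rw [← inf_compl_eq_bot (a := f ⊥), ← map_compl, left_eq_inf, ← sup_eq_right, ← map_sup,
      bot_sup_eq]

end BooleanHom

section QuasiDiagonal

variable {A : Type*} [BooleanAlgebra A] {f : BoundedLatticeHom A A} {d : A}

/-- `d` is a quasi-diagonal element for the Boolean endomorphism `f`; in a csp-algebra `d_kl` plays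
this role for `s_kl`. -/
structure IsQuasiDiagonal (f : BoundedLatticeHom A A) (d : A) : Prop where
  map_eq_top : f d = ⊤
  inf_le_map : ∀ x, x ⊓ d ≤ f x

namespace IsQuasiDiagonal

theorem map_inf_eq (hd : IsQuasiDiagonal f d) (x : A) : f x ⊓ d = x ⊓ d := by
  refine le_antisymm (le_inf ?_ inf_le_right) (le_inf (hd.inf_le_map x) inf_le_right)
  have hdisj : Disjoint (xᶜ ⊓ d) (f x) := by
    rw [← le_compl_iff_disjoint_right, ← map_compl' f x]
    exact hd.inf_le_map xᶜ
  rwa [← disjoint_compl_right_iff, inf_comm, disjoint_right_comm, inf_comm]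

theorem map_eq_top_iff (hd : IsQuasiDiagonal f d) {x : A} : f x = ⊤ ↔ d ≤ x := by
  constructor
  · intro hx
    simpa only [hx, top_inf_eq, right_eq_inf] using hd.map_inf_eq x
  · intro hx
    exact top_unique (hd.map_eq_top ▸ OrderHomClass.mono f hx)

end IsQuasiDiagonal

end QuasiDiagonal

/-- The FPA axioms over an arbitrary index set, without the additivity (F2) of the
cylindrifications `c i`. Axiom (F6) is carried by the types of the substitutions `s i j` and the
transpositions `p i j`. -/
structure IsWeakFPA {ι A : Type*} [BooleanAlgebra A] (c : ι → A → A)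
    (s p : ι → ι → BoundedLatticeHom A A) : Prop where
  s_self : ∀ i x, s i i x = x
  p_self : ∀ i x, p i i x = x
  p_comm : ∀ i j x, p i j x = p j i x
  le_c : ∀ i x, x ≤ c i x
  s_c : ∀ i j x, s i j (c i x) = c i x
  c_s : ∀ i j x, i ≠ j → c i (s i j x) = s i j x
  s_c_comm : ∀ i j k x, k ≠ i → k ≠ j → s i j (c k x) = c k (s i j x)
  p_p : ∀ i j x, p i j (p i j x) = x
  p_p_comm : ∀ i j k x, i ≠ j → i ≠ k → j ≠ k → p i j (p i k x) = p j k (p i j x)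
  p_s : ∀ i j x, p i j (s j i x) = s i j x

namespace IsWeakFPA

variable {ι A : Type*} [BooleanAlgebra A] {c : ι → A → A} {s p : ι → ι → BoundedLatticeHom A A}
  {d : ι → ι → A} {i j k l : ι} {x : A}

theorem s_eq_self (h : IsWeakFPA c s p) (hx : c i x = x) (j : ι) : s i j x = x := by
  rw [← hx, h.s_c]

theorem c_eq_self_iff (h : IsWeakFPA c s p) (hij : i ≠ j) : c i x = x ↔ s i j x = x :=
  ⟨fun hx => h.s_eq_self hx j, fun hx => by rw [← hx, h.c_s i j x hij]⟩

theorem c_bot (h : IsWeakFPA c s p) (hij : i ≠ j) : c i ⊥ = ⊥ :=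
  (h.c_eq_self_iff hij).2 (map_bot (s i j))

theorem c_compl_eq_self (h : IsWeakFPA c s p) (hij : i ≠ j) (hx : c i x = x) : c i xᶜ = xᶜ := by
  rw [h.c_eq_self_iff hij, map_compl', h.s_eq_self hx]

theorem s_eq_p (h : IsWeakFPA c s p) (hx : c j x = x) (i : ι) : s i j x = p i j x := by
  rw [← h.p_s, h.s_eq_self hx]

theorem c_p_eq_self (h : IsWeakFPA c s p) (hij : i ≠ j) (hx : c j x = x) :
    c i (p i j x) = p i j x := by
  rw [← h.s_eq_p hx, h.c_s i j x hij]

theorem d_self (h : IsWeakFPA c s p) (hd : ∀ i j, IsQuasiDiagonal (s i j) (d i j)) (i : ι) :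
    d i i = ⊤ := by
  rw [← (hd i i).map_eq_top, h.s_self]

theorem d_comm (h : IsWeakFPA c s p) (hd : ∀ i j, IsQuasiDiagonal (s i j) (d i j)) (i j : ι) :
    d i j = d j i := by
  have d_le : ∀ i j, d i j ≤ d j i := fun i j => (hd i j).map_eq_top_iff.1 <| by
    rw [← h.p_s, (hd j i).map_eq_top, map_top]
  exact le_antisymm (d_le i j) (d_le j i)

theorem c_d (h : IsWeakFPA c s p) (hd : ∀ i j, IsQuasiDiagonal (s i j) (d i j))
    (hki : k ≠ i) (hkj : k ≠ j) : c k (d i j) = d i j := by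
  have hs : s i j (c k (d i j)ᶜ)ᶜ = ⊤ := by
    rw [map_compl', h.s_c_comm i j k _ hki hkj, map_compl', (hd i j).map_eq_top, compl_top,
      h.c_bot hki, compl_bot]
  have hcompl : c k (d i j)ᶜ = (d i j)ᶜ :=
    le_antisymm (le_compl_comm.1 ((hd i j).map_eq_top_iff.1 hs)) (h.le_c k _)
  simpa only [compl_compl] using h.c_compl_eq_self hki hcompl

theorem p_inf_d (h : IsWeakFPA c s p) (hd : ∀ i j, IsQuasiDiagonal (s i j) (d i j))
    (hx : c j x = x) (i : ι) : p i j x ⊓ d i j = x ⊓ d i j := by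
  rw [← h.s_eq_p hx, (hd i j).map_inf_eq]

theorem d_le_p_p_d (h : IsWeakFPA c s p) (hd : ∀ i j, IsQuasiDiagonal (s i j) (d i j))
    (hij : i ≠ j) (hik : i ≠ k) (hjk : j ≠ k) : d i j ≤ p i j (p k j (d i k)) := by
  have hcj : c j (d i k) = d i k := h.c_d hd hij.symm hjk
  calc d i j = s k i (d i k ⊓ d i j) := by
        rw [map_inf, h.d_comm hd i k, (hd k i).map_eq_top, top_inf_eq,
          h.s_eq_self (h.c_d hd hik.symm hjk.symm)]
    _ = s k i (p i j (d i k) ⊓ d i j) := by rw [h.p_inf_d hd hcj]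
    _ ≤ s k i (p i j (d i k)) := OrderHomClass.mono (s k i) inf_le_left
    _ = p k i (p i j (d i k)) := h.s_eq_p (h.c_p_eq_self hij hcj) k
    _ = p i j (p k j (d i k)) := by
        rw [h.p_comm k i, h.p_comm k j, h.p_comm i j, h.p_comm i j,
          h.p_p_comm j i k _ hij.symm hjk hik]

theorem d_trans (h : IsWeakFPA c s p) (hd : ∀ i j, IsQuasiDiagonal (s i j) (d i j))
    (hij : i ≠ j) (hik : i ≠ k) (hjk : j ≠ k) : d i j ⊓ d j k ≤ d i k := by
  have hcj : c j (d i k) = d i k := h.c_d hd hij.symm hjk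
  have hci : c i (d j k) = d j k := h.c_d hd hij hik
  have hkj : p k j (d i k) ⊓ d j k ≤ d i k := by
    rw [h.d_comm hd j k, h.p_inf_d hd hcj]
    exact inf_le_left
  calc d i j ⊓ d j k = d i j ⊓ (p i j (d j k) ⊓ d i j) := by
        rw [h.p_comm i j, h.d_comm hd i j, h.p_inf_d hd hci, inf_comm (d j k), inf_left_idem]
    _ ≤ p i j (p k j (d i k)) ⊓ (p i j (d j k) ⊓ d i j) :=
        inf_le_inf_right _ (h.d_le_p_p_d hd hij hik hjk)
    _ = p i j (p k j (d i k) ⊓ d j k) ⊓ d i j := by rw [map_inf, inf_assoc]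
    _ ≤ p i j (d i k) ⊓ d i j := inf_le_inf_right _ (OrderHomClass.mono (p i j) hkj)
    _ ≤ d i k := (h.p_inf_d hd hcj i).trans_le inf_le_left

theorem d_le_p_d (h : IsWeakFPA c s p) (hd : ∀ i j, IsQuasiDiagonal (s i j) (d i j))
    (hij : i ≠ j) (hik : i ≠ k) (hjk : j ≠ k) : d j k ≤ p i j (d i k) := by
  have hcj : c j (d i k) = d i k := h.c_d hd hij.symm hjk
  calc d j k = s i j (d i j ⊓ d j k) := by
        rw [map_inf, (hd i j).map_eq_top, top_inf_eq, h.s_eq_self (h.c_d hd hij hik)]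
    _ ≤ s i j (d i k) := OrderHomClass.mono (s i j) (h.d_trans hd hij hik hjk)
    _ = p i j (d i k) := h.s_eq_p hcj i

theorem p_d_left (h : IsWeakFPA c s p) (hd : ∀ i j, IsQuasiDiagonal (s i j) (d i j))
    (hij : i ≠ j) (hik : i ≠ k) (hjk : j ≠ k) : p i j (d i k) = d j k := by
  refine le_antisymm ?_ (h.d_le_p_d hd hij hik hjk)
  calc p i j (d i k) ≤ p i j (p j i (d j k)) :=
        OrderHomClass.mono (p i j) (h.d_le_p_d hd hij.symm hjk hik)
    _ = d j k := by rw [h.p_comm j i, h.p_p]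

theorem p_d_pair (h : IsWeakFPA c s p) (hd : ∀ i j, IsQuasiDiagonal (s i j) (d i j))
    (hij : i ≠ j) (hik : i ≠ k) (hjk : j ≠ k) : p i j (d i j) = d i j :=
  calc p i j (d i j) = p i j (p i k (d k j)) := by
        rw [h.p_comm i k, h.p_d_left hd hik.symm hjk.symm hij]
    _ = p j k (p i j (d j k)) := by rw [h.p_p_comm i j k _ hij hik hjk, h.d_comm hd k j]
    _ = p j k (d i k) := by rw [h.p_comm i j, h.p_d_left hd hij.symm hjk hik]
    _ = d i j := by
        rw [h.p_comm j k, h.d_comm hd i k, h.p_d_left hd hjk.symm hik.symm hij.symm,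
          h.d_comm hd j i]

theorem p_d_of_disjoint (h : IsWeakFPA c s p) (hd : ∀ i j, IsQuasiDiagonal (s i j) (d i j))
    (hij : i ≠ j) (hik : i ≠ k) (hil : i ≠ l) (hjk : j ≠ k) (hjl : j ≠ l) (hkl : k ≠ l) :
    p i j (d k l) = d k l :=
  calc p i j (d k l) = p i j (p i k (d i l)) := by rw [h.p_d_left hd hik hil hkl]
    _ = p j k (p i j (d i l)) := h.p_p_comm i j k _ hij hik hjk
    _ = d k l := by rw [h.p_d_left hd hij hil hjl, h.p_d_left hd hjk hjl hkl]

theorem p_d_swap_left [DecidableEq ι] (h : IsWeakFPA c s p)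
    (hd : ∀ i j, IsQuasiDiagonal (s i j) (d i j)) (hij : i ≠ j) (hil : i ≠ l) (hjl : j ≠ l)
    (k : ι) : p i j (d k l) = d (Equiv.swap i j k) l := by
  rcases eq_or_ne i k with rfl | hik
  · rw [Equiv.swap_apply_left, h.p_d_left hd hij hil hjl]
  rcases eq_or_ne j k with rfl | hjk
  · rw [Equiv.swap_apply_right, h.p_comm, h.p_d_left hd hij.symm hjl hil]
  rw [Equiv.swap_apply_of_ne_of_ne hik.symm hjk.symm]
  rcases eq_or_ne k l with rfl | hkl
  · rw [h.d_self hd, map_top]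
  · exact h.p_d_of_disjoint hd hij hik hil hjk hjl hkl

end IsWeakFPA

theorem stmt13_general {ι A : Type*} [DecidableEq ι] [BooleanAlgebra A] (hι : 3 ≤ Cardinal.mk ι)
    {c : ι → A → A} {s p : ι → ι → BoundedLatticeHom A A} {d : ι → ι → A} (h : IsWeakFPA c s p)
    (hd : ∀ k l, IsQuasiDiagonal (s k l) (d k l)) (i j k l : ι) :
    p i j (d k l) = d (Equiv.swap i j k) (Equiv.swap i j l) := by
  rcases eq_or_ne i j with rfl | hij
  · rw [h.p_self, Equiv.swap_self, Equiv.refl_apply, Equiv.refl_apply]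
  rcases eq_or_ne k l with rfl | hkl
  · rw [h.d_self hd, h.d_self hd, map_top]
  by_cases hl : i ≠ l ∧ j ≠ l
  · rw [h.p_d_swap_left hd hij hl.1 hl.2, Equiv.swap_apply_of_ne_of_ne hl.1.symm hl.2.symm]
  by_cases hk : i ≠ k ∧ j ≠ k
  · rw [h.d_comm hd k l, h.p_d_swap_left hd hij hk.1 hk.2,
      Equiv.swap_apply_of_ne_of_ne hk.1.symm hk.2.symm, h.d_comm hd]
  obtain ⟨m, hmi, hmj⟩ := Cardinal.exists_ne_ne_of_three_le hι i j
  have hpair : p i j (d i j) = d i j := h.p_d_pair hd hij hmi.symm hmj.symm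
  obtain ⟨rfl, rfl⟩ | ⟨rfl, rfl⟩ : (k = i ∧ l = j) ∨ (k = j ∧ l = i) := by grind
  · rw [Equiv.swap_apply_left, Equiv.swap_apply_right, hpair, h.d_comm hd]
  · rw [Equiv.swap_apply_left, Equiv.swap_apply_right, h.d_comm hd, hpair]

/-- Lemma: in any `FPA_n` (`n ≥ 3`) with quasi-diagonal elements `d_kl` satisfying
`s_kl d_kl = 1` and `x · d_kl ≤ s_kl x`, one has `p_ij d_kl = d_{τ(k)τ(l)}` where
`τ = [i,j]`. -/
theorem stmt13 {n : ℕ} (hn : 3 ≤ n) {A : Type} [BooleanAlgebra A]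
    (c : Fin n → A → A) (s : Fin n → Fin n → A → A) (p : Fin n → Fin n → A → A)
    (hsii : ∀ (i : Fin n) (x : A), s i i x = x)
    (hpii : ∀ (i : Fin n) (x : A), p i i x = x)
    (hpsymm : ∀ (i j : Fin n) (x : A), p i j x = p j i x)
    (hF1 : ∀ (i : Fin n) (x : A), x ≤ c i x)
    (hF2 : ∀ (i : Fin n) (x y : A), c i (x ⊔ y) = c i x ⊔ c i y)
    (hF3 : ∀ (i j : Fin n) (x : A), s i j (c i x) = c i x)
    (hF4 : ∀ (i j : Fin n) (x : A), i ≠ j → c i (s i j x) = s i j x)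
    (hF5 : ∀ (i j k : Fin n) (x : A), k ≠ i → k ≠ j → s i j (c k x) = c k (s i j x))
    (hF6ssup : ∀ (i j : Fin n) (x y : A), s i j (x ⊔ y) = s i j x ⊔ s i j y)
    (hF6scompl : ∀ (i j : Fin n) (x : A), s i j xᶜ = (s i j x)ᶜ)
    (hF6psup : ∀ (i j : Fin n) (x y : A), p i j (x ⊔ y) = p i j x ⊔ p i j y)
    (hF6pcompl : ∀ (i j : Fin n) (x : A), p i j xᶜ = (p i j x)ᶜ)
    (hF7 : ∀ (i j : Fin n) (x : A), p i j (p i j x) = x)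
    (hF8 : ∀ (i j k : Fin n) (x : A), i ≠ j → i ≠ k → j ≠ k →
      p i j (p i k x) = p j k (p i j x))
    (hF9 : ∀ (i j : Fin n) (x : A), p i j (s j i x) = s i j x)
    (d : Fin n → Fin n → A)
    (hd1 : ∀ k l : Fin n, s k l (d k l) = ⊤)
    (hd2 : ∀ (k l : Fin n) (x : A), x ⊓ d k l ≤ s k l x) :
    ∀ i j k l : Fin n,
      p i j (d k l) = d (Equiv.swap i j k) (Equiv.swap i j l) :=
  stmt13_general (by simpa using hn)
    (s := fun i j => boundedLatticeHomOfSupCompl (s i j) (hF6ssup i j) (hF6scompl i j))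
    (p := fun i j => boundedLatticeHomOfSupCompl (p i j) (hF6psup i j) (hF6pcompl i j))
    ⟨hsii, hpii, hpsymm, hF1, hF3, hF4, hF5, hF7, hF8, hF9⟩ fun k l => ⟨hd1 k l, hd2 k l⟩
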